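/- Let A ∈ ℝ^{n×n}, B ∈ ℝ^{n×m}, C ∈ ℝ^{p×n}, and assume that the generalized unstable subspace X₊(A) is contained in ker C. Then the Lyapunov equation AᵀX + XA + CᵀC = 0 has at least one symmetric positive semidefinite solution, and among all symmetric positive semidefinite solutions there is exactly one solution X with the property X₊(A) ⊆ ker X. -/

import Mathlib

open Matrix Filter Topology Function
open scoped Kronecker

noncomputable section

/-- Complexification of a real matrix. -/
def cplx {α β : Type*} (M : Matrix α β ℝ) : Matrix α β ℂ := M.map Complex.ofReal

/-- Transfer function `S(s) = C (sI - A)⁻¹ B` of the system `ẋ = Ax + Bu, y = Cx`. -/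
def transfer {n m p : ℕ} (A : Matrix (Fin n) (Fin n) ℝ) (B : Matrix (Fin n) (Fin m) ℝ)
    (C : Matrix (Fin p) (Fin n) ℝ) (s : ℂ) : Matrix (Fin p) (Fin m) ℂ :=
  cplx C * (s • (1 : Matrix (Fin n) (Fin n) ℂ) - cplx A)⁻¹ * cplx B

/-- Squared H₂-norm: `(1/2π) ∫ tr(S(-iω)ᵀ S(iω)) dω`. -/
def H2normSq {α β : Type*} [Fintype α] [Fintype β] (S : ℂ → Matrix α β ℂ) : ℝ :=
  (1 / (2 * Real.pi)) *
    ∫ ω : ℝ, ((S (-((ω : ℂ) * Complex.I)))ᵀ * S ((ω : ℂ) * Complex.I)).trace.re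

/-- Largest singular value of a complex matrix (its ℓ²-operator norm). -/
def sigmaMax {α β : Type*} [Fintype α] [Fintype β] [DecidableEq β] (M : Matrix α β ℂ) : ℝ :=
  ‖LinearMap.toContinuousLinearMap (Matrix.toEuclideanLin M)‖

/-- Smallest singular value of a complex matrix: `√(λ_min(Mᴴ M))`. -/
def sigmaMinC {α β : Type*} [Fintype α] [Fintype β] [DecidableEq β] (M : Matrix α β ℂ) : ℝ :=
  Real.sqrt (sInf (spectrum ℝ (Mᴴ * M)))

/-- H∞-norm: `sup_{ω ∈ ℝ} σ_max(S(iω))`. -/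
def HinfNorm {α β : Type*} [Fintype α] [Fintype β] [DecidableEq β] (S : ℂ → Matrix α β ℂ) : ℝ :=
  ⨆ ω : ℝ, sigmaMax (S ((ω : ℂ) * Complex.I))

/-- Generalized unstable subspace `X₊(A)`: direct sum of the generalized eigenspaces of (the
complexification of) `A` corresponding to eigenvalues with nonnegative real part. -/
def unstableSubspace {n : ℕ} (A : Matrix (Fin n) (Fin n) ℝ) : Submodule ℂ (Fin n → ℂ) :=
  ⨆ μ ∈ {μ : ℂ | 0 ≤ μ.re}, Module.End.maxGenEigenspace (Matrix.toLin' (cplx A)) μ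

/-- A complex square matrix is Hurwitz if all its eigenvalues have negative real part. -/
def IsHurwitz {n : ℕ} (M : Matrix (Fin n) (Fin n) ℂ) : Prop :=
  ∀ μ ∈ spectrum ℂ M, μ.re < 0

/-- Transfer function `S_λ(s) = λ (sI - A + λB)⁻¹ E` of the auxiliary system. -/
def auxS {n r : ℕ} (A B : Matrix (Fin n) (Fin n) ℝ) (E : Matrix (Fin n) (Fin r) ℝ)
    (lam : ℝ) (s : ℂ) : Matrix (Fin n) (Fin r) ℂ :=
  (lam : ℂ) • ((s • (1 : Matrix (Fin n) (Fin n) ℂ) - cplx A + (lam : ℂ) • cplx B)⁻¹ * cplx E)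

/-- Transfer function `S(s) = (L⊗Iₙ)(sI - I_N⊗A + L⊗B)⁻¹(M⊗E)` of the original network. -/
def netS {N n r m : ℕ} (L : Matrix (Fin N) (Fin N) ℝ) (A B : Matrix (Fin n) (Fin n) ℝ)
    (E : Matrix (Fin n) (Fin r) ℝ) (M : Matrix (Fin N) (Fin m) ℝ) (s : ℂ) :
    Matrix (Fin N × Fin n) (Fin m × Fin r) ℂ :=
  cplx (L ⊗ₖ (1 : Matrix (Fin n) (Fin n) ℝ)) *
    (s • (1 : Matrix (Fin N × Fin n) (Fin N × Fin n) ℂ) -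
      cplx ((1 : Matrix (Fin N) (Fin N) ℝ) ⊗ₖ A - L ⊗ₖ B))⁻¹ *
    cplx (M ⊗ₖ E)

/-- Transfer function `Ŝ(s) = (LP⊗Iₙ)(sI - I_k⊗A + L̂⊗B)⁻¹(M̂⊗E)` of the reduced network. -/
def netShat {N n r m k : ℕ} (L : Matrix (Fin N) (Fin N) ℝ) (P : Matrix (Fin N) (Fin k) ℝ)
    (Lhat : Matrix (Fin k) (Fin k) ℝ) (Mhat : Matrix (Fin k) (Fin m) ℝ)
    (A B : Matrix (Fin n) (Fin n) ℝ) (E : Matrix (Fin n) (Fin r) ℝ) (s : ℂ) :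
    Matrix (Fin N × Fin n) (Fin m × Fin r) ℂ :=
  cplx ((L * P) ⊗ₖ (1 : Matrix (Fin n) (Fin n) ℝ)) *
    (s • (1 : Matrix (Fin k × Fin n) (Fin k × Fin n) ℂ) -
      cplx ((1 : Matrix (Fin k) (Fin k) ℝ) ⊗ₖ A - Lhat ⊗ₖ B))⁻¹ *
    cplx (Mhat ⊗ₖ E)

/-- Transfer function `S(s) = L (sI + L)⁻¹ M` of the single-integrator network. -/
def singleS {N m : ℕ} (L : Matrix (Fin N) (Fin N) ℝ) (M : Matrix (Fin N) (Fin m) ℝ)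
    (s : ℂ) : Matrix (Fin N) (Fin m) ℂ :=
  cplx L * (s • (1 : Matrix (Fin N) (Fin N) ℂ) + cplx L)⁻¹ * cplx M

/-- Transfer function `Ŝ(s) = LP (sI + L̂)⁻¹ M̂` of the reduced single-integrator network. -/
def singleShat {N m k : ℕ} (L : Matrix (Fin N) (Fin N) ℝ) (P : Matrix (Fin N) (Fin k) ℝ)
    (Lhat : Matrix (Fin k) (Fin k) ℝ) (Mhat : Matrix (Fin k) (Fin m) ℝ) (s : ℂ) :
    Matrix (Fin N) (Fin m) ℂ :=
  cplx (L * P) * (s • (1 : Matrix (Fin k) (Fin k) ℂ) + cplx Lhat)⁻¹ * cplx Mhat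

/-- Squared Frobenius norm `‖M‖_F² = tr(MᵀM)`. -/
def frobSq {α β : Type*} [Fintype α] [Fintype β] (M : Matrix α β ℝ) : ℝ := (Mᵀ * M).trace

end

section Helpers

lemma aux_hasDeriv_poly {n : ℕ} (w : ℕ → (Fin n → ℂ)) (N : ℕ) (t : ℝ) :
    HasDerivAt (fun t : ℝ => ∑ k ∈ Finset.range (N + 1), ((t : ℂ) ^ k / (k.factorial : ℂ)) • w k)
      (∑ k ∈ Finset.range N, ((t : ℂ) ^ k / (k.factorial : ℂ)) • w (k + 1)) t := by
  have h1 : ∀ k : ℕ, HasDerivAt (fun t : ℝ => ((t : ℂ) ^ (k + 1) / ((k + 1).factorial : ℂ)))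
      ((t : ℂ) ^ k / (k.factorial : ℂ)) t := by
    intro k
    have h := (((hasDerivAt_id (t : ℂ)).pow (k + 1)).div_const
      ((k + 1).factorial : ℂ)).comp_ofReal
    refine h.congr_deriv ?_
    have hk : (k.factorial : ℂ) ≠ 0 := by exact_mod_cast k.factorial_ne_zero
    have hk1 : ((k : ℂ) + 1) ≠ 0 := by exact_mod_cast k.succ_ne_zero
    simp only [Nat.factorial_succ, id]
    push_cast
    field_simp
  have h2 : HasDerivAt (fun t : ℝ => ∑ k ∈ Finset.range N,
      ((t : ℂ) ^ (k + 1) / ((k + 1).factorial : ℂ)) • w (k + 1))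
      (∑ k ∈ Finset.range N, ((t : ℂ) ^ k / (k.factorial : ℂ)) • w (k + 1)) t :=
    HasDerivAt.fun_sum fun k _ => (h1 k).smul_const (w (k + 1))
  have h3 := h2.add_const (w 0)
  refine h3.congr_of_eventuallyEq (Eventually.of_forall fun s => ?_)
  simp [Finset.sum_range_succ']

lemma aux_tendsto (μ : ℂ) (hμ : μ.re < 0) (k : ℕ) :
    Tendsto (fun t : ℝ => Complex.exp (μ * t) * ((t : ℂ) ^ k / (k.factorial : ℂ))) atTop (𝓝 0) := by
  have h := (isLittleO_pow_exp_pos_mul_atTop k (b := -μ.re) (by linarith)).tendsto_div_nhds_zero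
  have h' : Tendsto (fun t : ℝ => Complex.exp (μ * t) * (t : ℂ) ^ k) atTop (𝓝 0) := by
    rw [tendsto_zero_iff_norm_tendsto_zero] at h ⊢
    refine h.congr fun t => ?_
    rw [norm_mul, norm_div, Complex.norm_exp, norm_pow, norm_pow, Complex.norm_real,
      Real.norm_of_nonneg (Real.exp_pos _).le, div_eq_mul_inv, ← Real.exp_neg]
    simp [mul_comm]
  have := h'.div_const (k.factorial : ℂ)
  simpa [mul_div_assoc] using this

lemma aux_curve {n : ℕ} (f : Module.End ℂ (Fin n → ℂ)) (s : Fin n → ℂ)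
    (hs : s ∈ ⨆ μ : {μ : ℂ // μ.re < 0}, f.maxGenEigenspace μ) :
    ∃ x : ℝ → (Fin n → ℂ), (∀ t, HasDerivAt x (f (x t)) t) ∧ x 0 = s ∧
      Tendsto x atTop (𝓝 0) := by
  refine Submodule.iSup_induction _ (motive := fun s => ∃ x : ℝ → (Fin n → ℂ),
    (∀ t, HasDerivAt x (f (x t)) t) ∧ x 0 = s ∧ Tendsto x atTop (𝓝 0)) hs ?_ ?_ ?_
  · rintro ⟨μ, hμ⟩ s hs
    rw [Module.End.mem_maxGenEigenspace] at hs
    obtain ⟨N, hN⟩ := hs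
    simp only at hN
    set g := f - μ • (1 : Module.End ℂ (Fin n → ℂ)) with hg
    let w : ℕ → (Fin n → ℂ) := fun k => (g ^ k) s
    have hw : ∀ k, g (w k) = w (k + 1) := fun k => by
      simp only [w]; rw [pow_succ']; rfl
    have hwN : w N = 0 := hN
    let p : ℝ → (Fin n → ℂ) :=
      fun t => ∑ k ∈ Finset.range (N + 1), ((t : ℂ) ^ k / (k.factorial : ℂ)) • w k
    refine ⟨fun t => Complex.exp (μ * t) • p t, fun t => ?_, ?_, ?_⟩
    · have hp := aux_hasDeriv_poly w N t
      have hp' : (∑ k ∈ Finset.range N, ((t : ℂ) ^ k / (k.factorial : ℂ)) • w (k + 1))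
          = g (p t) := by
        simp only [p, map_sum, map_smul, hw]
        rw [Finset.sum_range_succ, ← hw N, hwN]
        simp
      rw [hp'] at hp
      have he : HasDerivAt (fun t : ℝ => Complex.exp (μ * t)) (Complex.exp (μ * t) * μ) t := by
        have := ((hasDerivAt_id (t : ℂ)).const_mul μ).cexp.comp_ofReal
        simpa using this
      refine (he.smul hp).congr_deriv ?_
      have : f (p t) = g (p t) + μ • p t := by simp [hg]
      rw [map_smul, this, smul_add, smul_smul]
    · simp [p, Finset.sum_range_succ', w]
    · have : Tendsto (fun t : ℝ => ∑ k ∈ Finset.range (N + 1),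
          (Complex.exp (μ * t) * ((t : ℂ) ^ k / (k.factorial : ℂ))) • w k) atTop
          (𝓝 (∑ k ∈ Finset.range (N + 1), (0 : ℂ) • w k)) :=
        tendsto_finset_sum _ fun k _ => (aux_tendsto μ hμ k).smul_const (w k)
      simpa [p, Finset.smul_sum, smul_smul] using this
  · exact ⟨fun _ => 0, fun t => by simpa using hasDerivAt_const t (0 : Fin n → ℂ), rfl,
      tendsto_const_nhds⟩
  · intro a b ha hb
    obtain ⟨x, hx, hx0, hxl⟩ := ha
    obtain ⟨y, hy, hy0, hyl⟩ := hb
    refine ⟨fun t => x t + y t, fun t => ?_, by simp [hx0, hy0], by simpa using hxl.add hyl⟩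
    rw [map_add]
    exact (hx t).add (hy t)

lemma aux_decomp {n : ℕ} (A : Matrix (Fin n) (Fin n) ℝ) (v : Fin n → ℂ) :
    ∃ s ∈ ⨆ μ : {μ : ℂ // μ.re < 0}, Module.End.maxGenEigenspace (Matrix.toLin' (cplx A)) μ,
    ∃ u ∈ unstableSubspace A, s + u = v := by
  have h : v ∈ (⨆ μ : {μ : ℂ // μ.re < 0},
      Module.End.maxGenEigenspace (Matrix.toLin' (cplx A)) μ) ⊔ unstableSubspace A := by
    have htop : (⊤ : Submodule ℂ (Fin n → ℂ)) ≤ (⨆ μ : {μ : ℂ // μ.re < 0},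
      Module.End.maxGenEigenspace (Matrix.toLin' (cplx A)) μ) ⊔ unstableSubspace A := by
      rw [← Module.End.iSup_maxGenEigenspace_eq_top (Matrix.toLin' (cplx A))]
      refine iSup_le fun μ => ?_
      by_cases hμ : μ.re < 0
      · exact le_sup_of_le_left (le_iSup (fun μ : {μ : ℂ // μ.re < 0} =>
          Module.End.maxGenEigenspace (Matrix.toLin' (cplx A)) μ) ⟨μ, hμ⟩)
      · refine le_sup_of_le_right ?_
        exact le_iSup₂_of_le (f := fun (μ : ℂ) (_ : μ ∈ {μ : ℂ | 0 ≤ μ.re}) =>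
          Module.End.maxGenEigenspace (Matrix.toLin' (cplx A)) μ) μ (not_lt.mp hμ) le_rfl
    exact htop trivial
  exact Submodule.mem_sup.mp h

lemma aux_invariant {n : ℕ} (A : Matrix (Fin n) (Fin n) ℝ) (u : Fin n → ℂ)
    (hu : u ∈ unstableSubspace A) : cplx A *ᵥ u ∈ unstableSubspace A := by
  have : unstableSubspace A ≤ (unstableSubspace A).comap (Matrix.toLin' (cplx A)) := by
    refine iSup₂_le fun μ hμ x hx => ?_
    refine (le_iSup₂_of_le (f := fun (μ : ℂ) (_ : μ ∈ {μ : ℂ | 0 ≤ μ.re}) =>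
          Module.End.maxGenEigenspace (Matrix.toLin' (cplx A)) μ) μ hμ le_rfl) ?_
    exact Module.End.mapsTo_maxGenEigenspace_of_comm (Commute.refl _) μ hx
  exact this hu

lemma cplx_mul {a b c : ℕ} (M : Matrix (Fin a) (Fin b) ℝ) (N : Matrix (Fin b) (Fin c) ℝ) :
    cplx (M * N) = cplx M * cplx N := by
  exact Matrix.map_mul (L := M) (M := N) (f := Complex.ofRealHom)

lemma cplx_add {a b : ℕ} (M N : Matrix (Fin a) (Fin b) ℝ) :
    cplx (M + N) = cplx M + cplx N := by
  ext; simp [cplx]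

lemma cplx_transpose {a b : ℕ} (M : Matrix (Fin a) (Fin b) ℝ) :
    cplx Mᵀ = (cplx M)ᴴ := by
  ext; simp [cplx, Matrix.conjTranspose_apply]

lemma aux_hasDeriv_quad {n : ℕ} (M : Matrix (Fin n) (Fin n) ℂ) (x : ℝ → (Fin n → ℂ))
    (x' : Fin n → ℂ) (t : ℝ) (hx : HasDerivAt x x' t) :
    HasDerivAt (fun t => star (x t) ⬝ᵥ M *ᵥ x t)
      (star x' ⬝ᵥ M *ᵥ x t + star (x t) ⬝ᵥ M *ᵥ x') t := by
  have hc := hasDerivAt_pi.mp hx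
  have hM : ∀ i, HasDerivAt (fun t => (M *ᵥ x t) i) ((M *ᵥ x') i) t := fun i => by
    simp only [Matrix.mulVec, dotProduct]
    exact HasDerivAt.fun_sum fun j _ => (hc j).const_mul (M i j)
  simp only [dotProduct, ← Finset.sum_add_distrib]
  exact HasDerivAt.fun_sum fun i _ => ((hc i).star).mul (hM i)

lemma aux_psd {n p : ℕ} (A X : Matrix (Fin n) (Fin n) ℝ) (D : Matrix (Fin p) (Fin n) ℝ)
    (hX : X.IsSymm) (hL : Aᵀ * X + X * A + Dᵀ * D = 0)
    (hk : ∀ u ∈ unstableSubspace A, cplx X *ᵥ u = 0) : X.PosSemidef := by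
  have hXH : (cplx X)ᴴ = cplx X := by rw [← cplx_transpose, hX]
  have hLc : (cplx A)ᴴ * cplx X + cplx X * cplx A + (cplx D)ᴴ * cplx D = 0 := by
    rw [← cplx_transpose, ← cplx_transpose, ← cplx_mul, ← cplx_mul, ← cplx_mul, ← cplx_add,
      ← cplx_add, hL]
    ext; simp [cplx]
  have key : ∀ v : Fin n → ℂ, 0 ≤ (star v ⬝ᵥ cplx X *ᵥ v).re := by
    intro v
    obtain ⟨s, hs, u, hu, rfl⟩ := aux_decomp A v
    have hXu := hk u hu
    have huX : star u ᵥ* cplx X = 0 := by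
      rw [← hXH, ← Matrix.star_mulVec, hXu, star_zero]
    have e : star (s + u) ⬝ᵥ cplx X *ᵥ (s + u) = star s ⬝ᵥ cplx X *ᵥ s := by
      rw [Matrix.mulVec_add, hXu, add_zero, star_add, add_dotProduct,
        Matrix.dotProduct_mulVec (star u), huX, zero_dotProduct, add_zero]
    rw [e]
    obtain ⟨x, hx, hx0, hxl⟩ := aux_curve _ s hs
    have hd : ∀ t, HasDerivAt (fun t => (star (x t) ⬝ᵥ cplx X *ᵥ x t).re)
        (-(star (cplx D *ᵥ x t) ⬝ᵥ (cplx D *ᵥ x t)).re) t := by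
      intro t
      have h := aux_hasDeriv_quad (cplx X) x _ t (hx t)
      have h' := Complex.reCLM.hasFDerivAt.comp_hasDerivAt t h
      refine h'.congr_deriv ?_
      have e2 : star (x t) ⬝ᵥ (((cplx A)ᴴ * cplx X + cplx X * cplx A + (cplx D)ᴴ * cplx D)
        *ᵥ x t) = 0 := by rw [hLc]; simp
      rw [Matrix.add_mulVec, Matrix.add_mulVec, dotProduct_add, dotProduct_add,
        ← Matrix.mulVec_mulVec, ← Matrix.mulVec_mulVec, ← Matrix.mulVec_mulVec,
        Matrix.dotProduct_mulVec _ (cplx A)ᴴ, ← Matrix.star_mulVec,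
        Matrix.dotProduct_mulVec _ (cplx D)ᴴ, ← Matrix.star_mulVec] at e2
      rw [Matrix.toLin'_apply, eq_neg_of_add_eq_zero_left e2]
      simp
    have hanti := antitone_of_hasDerivAt_nonpos hd (fun t => by
      have : 0 ≤ (star (cplx D *ᵥ x t) ⬝ᵥ (cplx D *ᵥ x t)).re := by
        simp only [dotProduct, Complex.re_sum]
        refine Finset.sum_nonneg fun i _ => ?_
        simp only [Pi.star_apply, Complex.star_def, Complex.mul_re, Complex.conj_re,
          Complex.conj_im]
        nlinarith [sq_nonneg ((cplx D *ᵥ x t) i).re, sq_nonneg ((cplx D *ᵥ x t) i).im]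
      simpa using this)
    have hlim : Tendsto (fun t => (star (x t) ⬝ᵥ cplx X *ᵥ x t).re) atTop (𝓝 0) := by
      have hcont : Continuous (fun y : Fin n → ℂ => (star y ⬝ᵥ cplx X *ᵥ y).re) := by
        fun_prop
      have := (hcont.tendsto 0).comp hxl
      simpa [Function.comp_def] using this
    have := hanti.le_of_tendsto hlim 0
    rwa [hx0] at this
  refine PosSemidef.of_dotProduct_mulVec_nonneg ?_ fun v => ?_
  · rw [Matrix.IsHermitian, Matrix.conjTranspose_eq_transpose_of_trivial]; exact hX
  · have h := key (fun i => (v i : ℂ))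
    have e : star (fun i => (v i : ℂ)) ⬝ᵥ cplx X *ᵥ (fun i => (v i : ℂ))
        = ((star v ⬝ᵥ X *ᵥ v : ℝ) : ℂ) := by
      simp [dotProduct, Matrix.mulVec, cplx]
    rw [e] at h
    simpa using h

lemma aux_inj {n : ℕ} (A X : Matrix (Fin n) (Fin n) ℝ)
    (hX : X.IsSymm) (hL : Aᵀ * X + X * A = 0)
    (hk : ∀ u ∈ unstableSubspace A, cplx X *ᵥ u = 0) : X = 0 := by
  have h1 : X.PosSemidef := aux_psd A X (0 : Matrix (Fin n) (Fin n) ℝ) hX (by simpa using hL) hk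
  have h2 : (-X).PosSemidef := by
    refine aux_psd A (-X) (0 : Matrix (Fin n) (Fin n) ℝ) hX.neg ?_ fun u hu => ?_
    · simp only [mul_neg, neg_mul, mul_zero, add_zero]
      rw [← neg_add, hL, neg_zero]
    · have : cplx (-X) = - cplx X := by ext; simp [cplx]
      rw [this, Matrix.neg_mulVec, hk u hu, neg_zero]
  open scoped MatrixOrder in
  have a : (0 : Matrix (Fin n) (Fin n) ℝ) ≤ X := Matrix.nonneg_iff_posSemidef.mpr h1
  open scoped MatrixOrder in
  have b : (0 : Matrix (Fin n) (Fin n) ℝ) ≤ -X := Matrix.nonneg_iff_posSemidef.mpr h2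
  open scoped MatrixOrder in
  exact le_antisymm (by simpa using b) a

lemma aux_mem_ker {n p : ℕ} (A : Matrix (Fin n) (Fin n) ℝ) (M : Matrix (Fin p) (Fin n) ℝ) :
    unstableSubspace A ≤ LinearMap.ker (Matrix.toLin' (cplx M)) ↔
      ∀ u ∈ unstableSubspace A, cplx M *ᵥ u = 0 := by
  constructor
  · intro h u hu
    simpa using h hu
  · intro h u hu
    simpa using h u hu

lemma aux_exists {n p : ℕ} (A : Matrix (Fin n) (Fin n) ℝ) (C : Matrix (Fin p) (Fin n) ℝ)
    (hC : ∀ u ∈ unstableSubspace A, cplx C *ᵥ u = 0) :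
    ∃ X : Matrix (Fin n) (Fin n) ℝ, X.IsSymm ∧ Aᵀ * X + X * A + Cᵀ * C = 0 ∧
      ∀ u ∈ unstableSubspace A, cplx X *ᵥ u = 0 := by
  let V : Submodule ℝ (Matrix (Fin n) (Fin n) ℝ) :=
    { carrier := {X | X.IsSymm ∧ ∀ u ∈ unstableSubspace A, cplx X *ᵥ u = 0}
      add_mem' := fun {X Y} hX hY => ⟨hX.1.add hY.1, fun u hu => by
        rw [cplx_add, Matrix.add_mulVec, hX.2 u hu, hY.2 u hu, add_zero]⟩
      zero_mem' := ⟨Matrix.isSymm_zero, fun u _ => by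
        have : cplx (0 : Matrix (Fin n) (Fin n) ℝ) = 0 := by ext; simp [cplx]
        rw [this, Matrix.zero_mulVec]⟩
      smul_mem' := fun c X hX => ⟨hX.1.smul c, fun u hu => by
        have : cplx (c • X) = (c : ℂ) • cplx X := by ext; simp [cplx]
        rw [this, Matrix.smul_mulVec, hX.2 u hu, smul_zero]⟩ }
  let L : Matrix (Fin n) (Fin n) ℝ →ₗ[ℝ] Matrix (Fin n) (Fin n) ℝ :=
    LinearMap.mulLeft ℝ Aᵀ + LinearMap.mulRight ℝ A
  have hLap : ∀ X, L X = Aᵀ * X + X * A := fun X => rfl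
  have hLV : ∀ X ∈ V, L X ∈ V := by
    rintro X ⟨h1, h2⟩
    refine ⟨?_, fun u hu => ?_⟩
    · rw [hLap, Matrix.IsSymm, Matrix.transpose_add, Matrix.transpose_mul, Matrix.transpose_mul,
        Matrix.transpose_transpose, h1.eq, add_comm]
    · rw [hLap, cplx_add, cplx_mul, cplx_mul, Matrix.add_mulVec, ← Matrix.mulVec_mulVec,
        ← Matrix.mulVec_mulVec, h2 u hu, h2 _ (aux_invariant A u hu), Matrix.mulVec_zero, add_zero]
  have hinj : Function.Injective (L.restrict hLV) := by
    rw [injective_iff_map_eq_zero]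
    rintro ⟨X, hX⟩ h
    have h' : L X = 0 := congrArg Subtype.val h
    exact Subtype.ext (aux_inj A X hX.1 h' hX.2)
  have hCV : -(Cᵀ * C) ∈ V := by
    refine V.neg_mem ⟨?_, fun u hu => ?_⟩
    · rw [Matrix.IsSymm, Matrix.transpose_mul, Matrix.transpose_transpose]
    · rw [cplx_mul, ← Matrix.mulVec_mulVec, hC u hu, Matrix.mulVec_zero]
  obtain ⟨⟨X, hX⟩, h⟩ := LinearMap.injective_iff_surjective.mp hinj ⟨_, hCV⟩
  have h' : L X = -(Cᵀ * C) := congrArg Subtype.val h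
  refine ⟨X, hX.1, ?_, hX.2⟩
  rw [← hLap, h', neg_add_cancel]

end Helpers

/-- Existence of a PSD solution of the Lyapunov equation
`AᵀX + XA + CᵀC = 0` when `X₊(A) ⊆ ker C`, and uniqueness of the PSD solution
satisfying `X₊(A) ⊆ ker X`. -/
theorem stmt0 {n m p : ℕ} (A : Matrix (Fin n) (Fin n) ℝ) (B : Matrix (Fin n) (Fin m) ℝ)
    (C : Matrix (Fin p) (Fin n) ℝ)
    (hC : unstableSubspace A ≤ LinearMap.ker (Matrix.toLin' (cplx C))) :
    (∃ X : Matrix (Fin n) (Fin n) ℝ, X.IsSymm ∧ X.PosSemidef ∧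
        Aᵀ * X + X * A + Cᵀ * C = 0) ∧
    (∃! X : Matrix (Fin n) (Fin n) ℝ, X.IsSymm ∧ X.PosSemidef ∧
        Aᵀ * X + X * A + Cᵀ * C = 0 ∧
        unstableSubspace A ≤ LinearMap.ker (Matrix.toLin' (cplx X))) := by
  have hC' := (aux_mem_ker A C).mp hC
  obtain ⟨X, hs, hL, hk⟩ := aux_exists A C hC'
  have hp := aux_psd A X C hs hL hk
  refine ⟨⟨X, hs, hp, hL⟩, X, ⟨hs, hp, hL, (aux_mem_ker A X).mpr hk⟩, ?_⟩
  rintro Y ⟨hYs, -, hYL, hYk⟩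
  have hYk' := (aux_mem_ker A Y).mp hYk
  refine sub_eq_zero.mp (aux_inj A (Y - X) (hYs.sub hs) ?_ fun u hu => ?_)
  · have : Aᵀ * (Y - X) + (Y - X) * A =
        (Aᵀ * Y + Y * A + Cᵀ * C) - (Aᵀ * X + X * A + Cᵀ * C) := by noncomm_ring
    rw [this, hYL, hL, sub_zero]
  · have : cplx (Y - X) = cplx Y - cplx X := by ext; simp [cplx]
    rw [this, Matrix.sub_mulVec, hYk' u hu, hk u hu, sub_zero]
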